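/- Let R be a commutative Noetherian ring of prime characteristic p whose Frobenius endomorphism is finite and flat, and let a be an ideal of R. Then a positive real number α is an F-jumping exponent of a if and only if there exists an ideal J of R whose radical contains a such that α = c^J(a). In other words, the set of positive F-jumping exponents of a equals the set of F-thresholds of a as J ranges over all ideals whose radical contains a. -/

import Mathlib

/-!
The proof rests on one consequence of the hypotheses: since `R` is Noetherian, every iterate of
Frobenius makes `R` a projective module over itself. A coordinate (dual basis) description of the
extended ideals `J^{[q]}` then shows that they commute with arbitrary intersections and with
colons by an element.

Intersections give the adjunction `b^{[1/q]} ≤ J ↔ b ≤ J^{[q]}`. Hence `τ(a^c) ≤ J` holds if and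
only if `a^{⌈c q⌉} ≤ J^{[q]}` for all `q = p^e`, `e ≥ 1`, and no stabilization argument is needed.
In particular `τ(a^c) ≤ J` forces `c^J(a) ≤ c`, while `c^J(a) < c` forces `τ(a^c) ≤ J`.

If `α` is a jumping exponent, these two remarks with `J = τ(a^α)` give `c^J(a) = α`.

Conversely, if `α = c^J(a) > 0`, the first remark shows that `τ(a^c)` is not contained in `J` for
`c < α`, so it remains to see that `τ(a^α) ≤ J`. This is the right-continuity of test ideals at
positive exponents. Put `r = ⌈α q⌉ ≥ 1`, `K = J^{[q]}` and `u ∈ a^r`. For every `k`,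
`u * u^{p^k} ∈ a^{r p^k + 1} ≤ K^{[p^k]}`, so the colon property gives
`u ∈ (K : u)^{[p^k]} ≤ (K : u)^{p^k}`. Krull's intersection theorem yields `l ∈ (K : u)` with
`l u = u`, and therefore `u ∈ K`.
-/

open Ideal

/-- The `q`-th bracket power `J^{[q]}` of an ideal: the ideal generated by
the `q`-th powers of the elements of `J`. -/
def bracketPow {R : Type*} [CommRing R] (J : Ideal R) (q : ℕ) : Ideal R :=
  Ideal.span ((fun x => x ^ q) '' (J : Set R))

/-- The ideal `b^{[1/q]}`: the smallest ideal `J` with `b ⊆ J^{[q]}`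
(realized as the intersection of all such ideals). -/
def frobRoot {R : Type*} [CommRing R] (b : Ideal R) (q : ℕ) : Ideal R :=
  sInf {J : Ideal R | b ≤ bracketPow J q}

/-- The generalized test ideal `τ(a^c) = ⋃_{e ≥ 1} (a^{⌈c p^e⌉})^{[1/p^e]}`. -/
noncomputable def testIdeal {R : Type*} [CommRing R] (p : ℕ) (a : Ideal R) (c : ℝ) : Ideal R :=
  ⨆ e : ℕ, frobRoot (a ^ ⌈c * (p : ℝ) ^ (e + 1)⌉₊) (p ^ (e + 1))

/-- `ν_a^J(q)`: the largest nonnegative integer `r` with `a^r ⊄ J^{[q]}`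
(and `0` if there is no such `r`). -/
noncomputable def nuF {R : Type*} [CommRing R] (a J : Ideal R) (q : ℕ) : ℕ :=
  sSup {r : ℕ | ¬ a ^ r ≤ bracketPow J q}

/-- The F-threshold `c^J(a) = sup_{e ≥ 1} ν_a^J(p^e)/p^e`. -/
noncomputable def FThreshold {R : Type*} [CommRing R] (p : ℕ) (a J : Ideal R) : ℝ :=
  ⨆ e : ℕ, (nuF a J (p ^ (e + 1)) : ℝ) / (p : ℝ) ^ (e + 1)

/-- `α > 0` is an F-jumping exponent of `a` if `τ(a^α) ≠ τ(a^c)` for all `0 ≤ c < α`. -/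
def IsFJumpingExponent {R : Type*} [CommRing R] (p : ℕ) (a : Ideal R) (α : ℝ) : Prop :=
  0 < α ∧ ∀ c : ℝ, 0 ≤ c → c < α → testIdeal p a c ≠ testIdeal p a α

/-- For a finite flat extension of a Noetherian ring, membership in extended ideals is detected by
coordinates: there are `R`-linear forms `φ j` on `S`, which therefore map `J S` into `J`, such that
`x ∈ J S` as soon as all `φ j x` lie in `J`. -/
theorem exists_coordinates {R S : Type*} [CommRing R] [CommRing S] [IsNoetherianRing R]
    (f : R →+* S) (hfin : f.Finite) (hflat : f.Flat) :
    ∃ φ : S → S → R, (∀ j r x, φ j (x * f r) = r * φ j x) ∧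
      ∀ (J : Ideal R) (x : S), x ∈ J.map f ↔ ∀ j, φ j x ∈ J := by
  let _ : Algebra R S := f.toAlgebra
  have : Module.Finite R S := hfin
  have : Module.Flat R S := hflat
  have : Module.FinitePresentation R S := Module.finitePresentation_of_finite R S
  have : Module.Projective R S := Module.Flat.projective_of_finitePresentation
  obtain ⟨s, hs⟩ := Module.projective_def'.1 (inferInstance : Module.Projective R S)
  have hsmul : ∀ (r : R) (x : S), x * f r = r • x := fun r x => by
    rw [Algebra.smul_def, mul_comm]; rfl
  have hlin : ∀ j r x, s (x * f r) j = r * s x j := fun j r x => by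
    rw [hsmul, map_smul]; simp
  refine ⟨fun j x => s x j, hlin, fun J x => ⟨fun hx j => ?_, fun hx => ?_⟩⟩
  · induction hx using Submodule.span_induction with
    | mem x hx =>
      obtain ⟨r, hr, rfl⟩ := hx
      rw [← one_mul (f r)]
      simp only [hlin]
      exact J.mul_mem_right _ hr
    | zero => simp
    | add x y _ _ hx hy => simpa using J.add_mem hx hy
    | smul c x hxm _ =>
      -- the coordinates are not `S`-linear, so the multiple is expanded over the generators again
      rw [smul_eq_mul]
      clear * - hxm hlin
      induction hxm using Submodule.span_induction generalizing c with
      | mem x hx =>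
        obtain ⟨r, hr, rfl⟩ := hx
        simp only [hlin]
        exact J.mul_mem_right _ hr
      | zero => simp
      | add x y _ _ hx hy => simpa [mul_add] using J.add_mem (hx c) (hy c)
      | smul d x _ hx => simpa [mul_assoc] using hx (c * d)
  · have h := LinearMap.congr_fun hs x
    rw [LinearMap.comp_apply, Finsupp.linearCombination_apply, LinearMap.id_apply] at h
    rw [← h]
    refine Ideal.sum_mem _ fun j _ => ?_
    simp only [← hsmul]
    exact Ideal.mul_mem_left _ _ (Ideal.mem_map_of_mem f (hx j))

section Frobenius

variable {R : Type*} [CommRing R] (p : ℕ) [Fact p.Prime] [CharP R p]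

theorem bracketPow_eq_map (J : Ideal R) (e : ℕ) :
    bracketPow J (p ^ e) = J.map (iterateFrobenius R p e) := by
  rfl

theorem bracketPow_add (J : Ideal R) (e k : ℕ) :
    bracketPow J (p ^ (e + k)) = bracketPow (bracketPow J (p ^ e)) (p ^ k) := by
  simp only [bracketPow_eq_map, Ideal.map_map]
  congr 1
  ext x
  simp [iterateFrobenius_def, pow_add, pow_mul]

theorem bracketPow_mono {J K : Ideal R} (h : J ≤ K) (q : ℕ) : bracketPow J q ≤ bracketPow K q :=
  Ideal.span_mono (Set.image_mono h)

theorem bracketPow_le_pow (J : Ideal R) (q : ℕ) : bracketPow J q ≤ J ^ q := by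
  refine Ideal.span_le.2 ?_
  rintro _ ⟨x, hx, rfl⟩
  exact Ideal.pow_mem_pow hx q

theorem iterateFrobenius_finite_flat (hfin : (frobenius R p).Finite)
    (hflat : (frobenius R p).Flat) (e : ℕ) :
    (iterateFrobenius R p e).Finite ∧ (iterateFrobenius R p e).Flat := by
  induction e with
  | zero =>
    rw [iterateFrobenius_zero]
    exact ⟨RingHom.Finite.id R, RingHom.Flat.id R⟩
  | succ e ih =>
    have : iterateFrobenius R p (e + 1) = (frobenius R p).comp (iterateFrobenius R p e) := by
      ext x
      simp [iterateFrobenius_def, frobenius_def, pow_succ, pow_mul]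
    rw [this]
    exact ⟨hfin.comp ih.1, RingHom.Flat.comp ih.2 hflat⟩

variable [IsNoetherianRing R] {p}

/-- The adjunction between `b ↦ b^{[1/q]}` and `J ↦ J^{[q]}`. -/
theorem frobRoot_le_iff (hfin : (frobenius R p).Finite) (hflat : (frobenius R p).Flat)
    (b J : Ideal R) (e : ℕ) : frobRoot b (p ^ e) ≤ J ↔ b ≤ bracketPow J (p ^ e) := by
  refine ⟨fun h => le_trans ?_ (bracketPow_mono h _), fun h => sInf_le h⟩
  obtain ⟨φ, -, hφ⟩ := exists_coordinates _ (iterateFrobenius_finite_flat p hfin hflat e).1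
    (iterateFrobenius_finite_flat p hfin hflat e).2
  intro x hx
  rw [bracketPow_eq_map, hφ]
  intro j
  refine (Submodule.mem_sInf).2 fun I hI => ?_
  have hxI := hI hx
  rw [bracketPow_eq_map] at hxI
  exact (hφ I x).1 hxI j

theorem testIdeal_le_iff (hfin : (frobenius R p).Finite) (hflat : (frobenius R p).Flat)
    (a J : Ideal R) (c : ℝ) : testIdeal p a c ≤ J ↔
      ∀ e : ℕ, a ^ ⌈c * (p : ℝ) ^ (e + 1)⌉₊ ≤ bracketPow J (p ^ (e + 1)) := by
  simp only [testIdeal, iSup_le_iff, frobRoot_le_iff hfin hflat]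

/-- A form of the triviality of tight closure in regular rings, with `u` itself as multiplier. -/
theorem mem_of_forall_pow_succ_mem (hfin : (frobenius R p).Finite)
    (hflat : (frobenius R p).Flat) (K : Ideal R) (u : R)
    (h : ∀ k : ℕ, u ^ (p ^ k + 1) ∈ bracketPow K (p ^ k)) : u ∈ K := by
  let L : Ideal R := K.colon {u}
  have hL : ∀ r, r ∈ L ↔ r * u ∈ K := fun r => by
    simp [L, Submodule.mem_colon_singleton]
  have hmem : ∀ k : ℕ, u ∈ bracketPow L (p ^ k) := by
    intro k
    obtain ⟨φ, hlin, hφ⟩ := exists_coordinates _ (iterateFrobenius_finite_flat p hfin hflat k).1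
      (iterateFrobenius_finite_flat p hfin hflat k).2
    rw [bracketPow_eq_map, hφ]
    intro j
    have hk := h k
    rw [bracketPow_eq_map, hφ] at hk
    have hj := hk j
    rw [pow_succ', ← iterateFrobenius_def, hlin] at hj
    rw [hL, mul_comm]
    exact hj
  have hinf : u ∈ (⨅ i : ℕ, L ^ i • (⊤ : Submodule R R)) := by
    refine (Submodule.mem_iInf _).2 fun i => ?_
    have hi : i ≤ p ^ i := (Nat.lt_pow_self (Fact.out : p.Prime).one_lt).le
    have := Ideal.pow_le_pow_right hi (bracketPow_le_pow L _ (hmem i))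
    simpa using this
  obtain ⟨l, hl⟩ := (Ideal.mem_iInf_smul_pow_eq_bot_iff L u).1 hinf
  rw [← hl]
  exact (hL _).1 l.2

/-- `ν_a^J(q)` is a genuine maximum when `a ≤ √J`. -/
theorem bddAbove_nuF (a J : Ideal R) (h : a ≤ J.radical) (e : ℕ) :
    BddAbove {r : ℕ | ¬ a ^ r ≤ bracketPow J (p ^ e)} := by
  have hrad : a ≤ (bracketPow J (p ^ e)).radical := by
    intro x hx
    obtain ⟨n, hn⟩ := h hx
    exact ⟨n * p ^ e, by
      rw [pow_mul]; exact Ideal.subset_span ⟨_, hn, rfl⟩⟩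
  obtain ⟨m, hm⟩ := Ideal.exists_pow_le_of_le_radical_of_fg hrad (IsNoetherian.noetherian a)
  refine ⟨m, fun r hr => ?_⟩
  by_contra! hlt
  exact hr ((Ideal.pow_le_pow_right hlt.le).trans hm)

theorem pow_le_of_nuF_lt (a J : Ideal R) (h : a ≤ J.radical) (e r : ℕ)
    (hr : nuF a J (p ^ e) < r) : a ^ r ≤ bracketPow J (p ^ e) := by
  by_contra hn
  exact absurd (le_csSup (bddAbove_nuF a J h e) hn) (not_le.2 hr)

theorem nuF_div_le (hfin : (frobenius R p).Finite) (hflat : (frobenius R p).Flat)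
    (a J : Ideal R) (c : ℝ) (hc : 0 ≤ c) (h : testIdeal p a c ≤ J) (e : ℕ) :
    (nuF a J (p ^ (e + 1)) : ℝ) / (p : ℝ) ^ (e + 1) ≤ c := by
  have hp : (0 : ℝ) < (p : ℝ) ^ (e + 1) := by
    have := (Fact.out : p.Prime).pos
    positivity
  rw [div_le_iff₀ hp]
  have h0 : 0 ≤ c * (p : ℝ) ^ (e + 1) := by positivity
  have : nuF a J (p ^ (e + 1)) ≤ ⌊c * (p : ℝ) ^ (e + 1)⌋₊ := by
    refine csSup_le' fun r hr => ?_
    by_contra! hlt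
    refine hr ((Ideal.pow_le_pow_right ?_).trans
      ((testIdeal_le_iff hfin hflat a J c).1 h e))
    exact Nat.ceil_le.2 ((Nat.floor_lt h0).1 hlt).le
  exact (Nat.cast_le.2 this).trans (Nat.floor_le h0)

theorem nuF_le (a J : Ideal R)
    (hb : BddAbove (Set.range fun e : ℕ =>
      (nuF a J (p ^ (e + 1)) : ℝ) / (p : ℝ) ^ (e + 1))) (e : ℕ) :
    (nuF a J (p ^ (e + 1)) : ℝ) ≤ FThreshold p a J * (p : ℝ) ^ (e + 1) := by
  have hp : (0 : ℝ) < (p : ℝ) ^ (e + 1) := by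
    have := (Fact.out : p.Prime).pos
    positivity
  rw [← div_le_iff₀ hp]
  exact le_ciSup hb e

theorem testIdeal_anti (hfin : (frobenius R p).Finite) (hflat : (frobenius R p).Flat)
    (a : Ideal R) {c d : ℝ} (h : c ≤ d) : testIdeal p a d ≤ testIdeal p a c := by
  rw [testIdeal_le_iff hfin hflat]
  intro e
  refine (Ideal.pow_le_pow_right ?_).trans ((testIdeal_le_iff hfin hflat a _ c).1 le_rfl e)
  gcongr

/-- The right-continuity step: at a positive threshold the test ideal already lies in `J`. -/
theorem testIdeal_FThreshold_le (hfin : (frobenius R p).Finite)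
    (hflat : (frobenius R p).Flat) (a J : Ideal R) (h : a ≤ J.radical)
    (hb : BddAbove (Set.range fun e : ℕ =>
      (nuF a J (p ^ (e + 1)) : ℝ) / (p : ℝ) ^ (e + 1)))
    (hpos : 0 < FThreshold p a J) : testIdeal p a (FThreshold p a J) ≤ J := by
  have hp : (0 : ℝ) < p := by exact_mod_cast (Fact.out : p.Prime).pos
  rw [testIdeal_le_iff hfin hflat]
  intro e u hu
  refine mem_of_forall_pow_succ_mem hfin hflat _ u fun k => ?_
  rw [← bracketPow_add]
  set r := ⌈FThreshold p a J * (p : ℝ) ^ (e + 1)⌉₊ with hr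
  have hr1 : 1 ≤ r := Nat.ceil_pos.2 (by positivity)
  have hle : a ^ (r * p ^ k + 1) ≤ bracketPow J (p ^ (e + 1 + k)) := by
    refine pow_le_of_nuF_lt a J h _ _ (Nat.lt_succ_of_le ?_)
    have h1 := nuF_le a J hb (e + k)
    have h2 : FThreshold p a J * (p : ℝ) ^ (e + 1) ≤ r := Nat.le_ceil _
    have h3 : e + k + 1 = e + 1 + k := by omega
    rw [h3] at h1
    have h4 : (nuF a J (p ^ (e + 1 + k)) : ℝ) ≤ r * (p : ℝ) ^ k := by
      refine h1.trans ?_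
      rw [pow_add _ (e + 1) k, ← mul_assoc]
      gcongr
    exact_mod_cast h4
  refine hle ((Ideal.pow_le_pow_right ?_ : a ^ (r * (p ^ k + 1)) ≤ _) ?_)
  · rw [mul_add, mul_one]
    omega
  · rw [pow_mul]
    exact Ideal.pow_mem_pow hu _

end Frobenius

/-- the positive F-jumping exponents of `a` are exactly the
F-thresholds of `a`. -/
theorem stmt14_jumping_iff_threshold
    {R : Type*} [CommRing R] [IsNoetherianRing R] (p : ℕ) [Fact p.Prime] [CharP R p]
    (hfin : (frobenius R p).Finite) (hflat : (frobenius R p).Flat)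
    (a : Ideal R) (α : ℝ) (hα : 0 < α) :
    IsFJumpingExponent p a α ↔
      ∃ J : Ideal R, a ≤ J.radical ∧ α = FThreshold p a J := by
  have hp : (0 : ℝ) < p := by exact_mod_cast (Fact.out : p.Prime).pos
  constructor
  · rintro ⟨-, hjump⟩
    have hrad : a ≤ (testIdeal p a α).radical := by
      intro x hx
      refine ⟨⌈α * (p : ℝ) ^ (0 + 1)⌉₊, ?_⟩
      have h1 := (testIdeal_le_iff hfin hflat a _ α).1 le_rfl 0 (Ideal.pow_mem_pow hx _)
      exact Ideal.pow_le_self (pow_ne_zero _ (Fact.out : p.Prime).ne_zero)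
        (bracketPow_le_pow _ _ h1)
    have hle := nuF_div_le hfin hflat a (testIdeal p a α) α hα.le le_rfl
    refine ⟨testIdeal p a α, hrad, le_antisymm ?_ (ciSup_le hle)⟩
    by_contra! hlt
    have h0 : 0 ≤ FThreshold p a (testIdeal p a α) := Real.iSup_nonneg fun e => by positivity
    -- strict inequality on both sides: `τ(a^c) ≤ τ(a^α)` may fail for `c` equal to the
    -- threshold, when the latter is `0`
    obtain ⟨c, hc1, hc2⟩ := exists_between hlt
    refine hjump c (h0.trans hc1.le) hc2 (le_antisymm ?_ (testIdeal_anti hfin hflat a hc2.le))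
    rw [testIdeal_le_iff hfin hflat]
    intro e
    refine pow_le_of_nuF_lt a _ hrad _ _ (Nat.lt_ceil.2 ?_)
    refine (nuF_le a _ ⟨α, by rintro _ ⟨e, rfl⟩; exact hle e⟩ e).trans_lt ?_
    gcongr
  · rintro ⟨J, hJ, rfl⟩
    -- the supremum of an unbounded family of reals is `0`, so positivity gives boundedness
    have hb : BddAbove (Set.range fun e : ℕ =>
        (nuF a J (p ^ (e + 1)) : ℝ) / (p : ℝ) ^ (e + 1)) := by
      by_contra hn
      exact hα.ne' (Real.iSup_of_not_bddAbove hn)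
    refine ⟨hα, fun c hc hlt heq => hlt.not_ge (ciSup_le fun e => ?_)⟩
    refine nuF_div_le hfin hflat a J c hc ?_ e
    rw [heq]
    exact testIdeal_FThreshold_le hfin hflat a J hJ hb hα
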